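/- Let r, p, q, k ∈ ℕ with r ≥ 2, p ≥ 1, and r·q ≤ p − 1. Set 𝓢 = 𝒮^r_{p−1,q} × 𝒮^r_{p,q} ⊆ V and (p₁, p₂) = (p−1, p). Let 𝐓 be a matrix differential operator whose components satisfy T_{ab} = Σ_{i+rj ≤ p_b, j ≤ q} M_{f^{ab}_{ij}} ∘ D_x^i ∘ D_y^j with all f^{ab}_{ij} = 0 for i + j > k, each component T_{ab} having nonpositive y-degree, and suppose 𝐓 preserves 𝓢. Then there exists 𝐏 in the ℂ-linear span of all compositions of at most k+1 elements of G = {T¹, …, T^{5+r}, J, Q⁻₀, Q⁻₁, Q⁺₀, Q⁺₁} ∪ {Q⁺_{2+α} : 0 ≤ α ≤ r−1} (the empty composition being the identity of V) such that 𝐓(w) = 𝐏(w) for all w ∈ 𝓢; moreover, if k ≤ q then 𝐓 = 𝐏 as endomorphisms of V. -/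

import Mathlib

noncomputable section

open MvPolynomial

/-- The bivariate polynomial ring `R = ℂ[x,y]`. -/
abbrev R2 : Type := MvPolynomial (Fin 2) ℂ

/-- The variable `x`. -/
def Xv : R2 := X 0

/-- The variable `y`. -/
def Yv : R2 := X 1

/-- The partial derivative `∂_x` as a `ℂ`-linear endomorphism. -/
def Dx : Module.End ℂ R2 := (pderiv (0 : Fin 2)).toLinearMap

/-- The partial derivative `∂_y` as a `ℂ`-linear endomorphism. -/
def Dy : Module.End ℂ R2 := (pderiv (1 : Fin 2)).toLinearMap

/-- Multiplication by `f` as an endomorphism. -/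
def Mf (f : R2) : Module.End ℂ R2 := LinearMap.mulLeft ℂ f

/-- All compositions (products) of at most `k` elements of `S`; the empty
composition is the identity. -/
def prodsLE (k : ℕ) (S : Set (Module.End ℂ R2)) : Set (Module.End ℂ R2) :=
  {T | ∃ l : List (Module.End ℂ R2), l.length ≤ k ∧ (∀ a ∈ l, a ∈ S) ∧ l.prod = T}

/-- The rectangular module `ℛ_{n,m}`. -/
def Rmod (n m : ℕ) : Submodule ℂ R2 :=
  Submodule.span ℂ {P : R2 | ∃ i j : ℕ, i ≤ n ∧ j ≤ m ∧ P = Xv ^ i * Yv ^ j}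

/-- The triangular module `𝒯ₙ`. -/
def Tmod (n : ℕ) : Submodule ℂ R2 :=
  Submodule.span ℂ {P : R2 | ∃ i j : ℕ, i + j ≤ n ∧ P = Xv ^ i * Yv ^ j}

/-- The staircase module `𝒮^r_{p,q}`. -/
def Smod (r p q : ℕ) : Submodule ℂ R2 :=
  Submodule.span ℂ {P : R2 | ∃ i j : ℕ, i + r * j ≤ p ∧ j ≤ q ∧ P = Xv ^ i * Yv ^ j}

/-- An endomorphism has nonpositive `y`-degree if it maps each monomial `xᵃyᵇ`
into the span of the monomials `x^c y^e` with `e ≤ b`. -/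
def NonposY (T : Module.End ℂ R2) : Prop :=
  ∀ a b : ℕ, T (Xv ^ a * Yv ^ b) ∈
    Submodule.span ℂ {P : R2 | ∃ c e : ℕ, e ≤ b ∧ P = Xv ^ c * Yv ^ e}

/-- `W¹ = D_x`. -/
def W1 : Module.End ℂ R2 := Dx

/-- `W² = M_{x²}∘D_x + r·M_{xy}∘D_y − p·M_x`. -/
def W2 (r p : ℕ) : Module.End ℂ R2 :=
  Mf (Xv ^ 2) * Dx + (r : ℂ) • (Mf (Xv * Yv) * Dy) - (p : ℂ) • Mf Xv

/-- `W³ = M_x∘D_x − (p/2)·id`. -/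
def W3 (p : ℕ) : Module.End ℂ R2 := Mf Xv * Dx - ((p : ℂ) / 2) • 1

/-- `W⁴ = M_y∘D_y`. -/
def W4 : Module.End ℂ R2 := Mf Yv * Dy

/-- `W^{5+i} = M_{xⁱ}∘D_y`. -/
def W5i (i : ℕ) : Module.End ℂ R2 := Mf (Xv ^ i) * Dy

/-- The generating set `{W¹, …, W^{5+r}}` of the realization `𝔤^{24,r}_p`. -/
def Wset (r p : ℕ) : Set (Module.End ℂ R2) :=
  {W1, W2 r p, W3 p, W4} ∪ {T | ∃ i ≤ r, T = W5i i}

/-- The rank-2 space `V = R × R`. -/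
abbrev V2 : Type := R2 × R2

/-- The matrix operator `𝐓(u,v) = (A u + B v, C u + D v)`. -/
def matOp (A B C D : Module.End ℂ R2) : Module.End ℂ V2 :=
  LinearMap.prod
    (A ∘ₗ LinearMap.fst ℂ R2 R2 + B ∘ₗ LinearMap.snd ℂ R2 R2)
    (C ∘ₗ LinearMap.fst ℂ R2 R2 + D ∘ₗ LinearMap.snd ℂ R2 R2)

/-- The diagonal matrix operator `diag(A, B)`. -/
def dg (A B : Module.End ℂ R2) : Module.End ℂ V2 := matOp A 0 0 B

/-- The scalar differential operator with coefficients `f` supported on `F`. -/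
def diffOp (F : Finset (ℕ × ℕ)) (f : ℕ × ℕ → R2) : Module.End ℂ R2 :=
  ∑ ij ∈ F, Mf (f ij) * Dx ^ ij.1 * Dy ^ ij.2

/-- The index set `{(i,j) : i + j ≤ k}`. -/
def ordIdx (k : ℕ) : Finset (ℕ × ℕ) :=
  (Finset.range (k + 1) ×ˢ Finset.range (k + 1)).filter (fun ij => ij.1 + ij.2 ≤ k)

/-- A scalar differential operator with polynomial coefficients, of order at most `k`. -/
def IsDiffOpLE (A : Module.End ℂ R2) (k : ℕ) : Prop :=
  ∃ f : ℕ × ℕ → R2, A = diffOp (ordIdx k) f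

/-- A matrix differential operator of order at most `k`. -/
def IsMatDiffOpLE (P : Module.End ℂ V2) (k : ℕ) : Prop :=
  ∃ A B C D : Module.End ℂ R2, IsDiffOpLE A k ∧ IsDiffOpLE B k ∧ IsDiffOpLE C k ∧
    IsDiffOpLE D k ∧ P = matOp A B C D

/-- Compositions of elements of `S` which are matrix differential operators of
order at most `k`. -/
def matProdsOrd (k : ℕ) (S : Set (Module.End ℂ V2)) : Set (Module.End ℂ V2) :=
  {P | ∃ l : List (Module.End ℂ V2), (∀ a ∈ l, a ∈ S) ∧ l.prod = P ∧ IsMatDiffOpLE P k}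

/-- Compositions of at most `k` elements of `S`; the empty composition is the identity. -/
def matProdsLE (k : ℕ) (S : Set (Module.End ℂ V2)) : Set (Module.End ℂ V2) :=
  {P | ∃ l : List (Module.End ℂ V2), l.length ≤ k ∧ (∀ a ∈ l, a ∈ S) ∧ l.prod = P}

/-- `Tⁱ = diag(Wⁱ(p−1), Wⁱ(p))`. -/
def Tg1 : Module.End ℂ V2 := dg W1 W1
def Tg2 (r p : ℕ) : Module.End ℂ V2 := dg (W2 r (p - 1)) (W2 r p)
def Tg3 (p : ℕ) : Module.End ℂ V2 := dg (W3 (p - 1)) (W3 p)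
def Tg4 : Module.End ℂ V2 := dg W4 W4
def Tg5i (i : ℕ) : Module.End ℂ V2 := dg (W5i i) (W5i i)

/-- `J = diag(((p+1)/2)·id, (p/2)·id)`. -/
def Jgen (p : ℕ) : Module.End ℂ V2 :=
  dg ((((p : ℂ) + 1) / 2) • 1) (((p : ℂ) / 2) • 1)

/-- `Q⁻₀(u,v) = (0, u)`. -/
def Qm0 : Module.End ℂ V2 := matOp 0 0 1 0

/-- `Q⁻₁(u,v) = (0, x·u)`. -/
def Qm1 : Module.End ℂ V2 := matOp 0 0 (Mf Xv) 0

/-- `Q⁺₀(u,v) = ((M_x∘D_x + r·M_y∘D_y − p·id) v, 0)`. -/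
def Qp0 (r p : ℕ) : Module.End ℂ V2 :=
  matOp 0 (Mf Xv * Dx + (r : ℂ) • (Mf Yv * Dy) - (p : ℂ) • 1) 0 0

/-- `Q⁺₁(u,v) = (D_x v, 0)`. -/
def Qp1 : Module.End ℂ V2 := matOp 0 Dx 0 0

/-- `Q⁺_{2+α}(u,v) = (x^α·(D_y v), 0)`. -/
def Qp2 (α : ℕ) : Module.End ℂ V2 := matOp 0 (Mf (Xv ^ α) * Dy) 0 0

/-- The generating set `G` for the staircase rank-2 module. -/
def Gstair (r p : ℕ) : Set (Module.End ℂ V2) :=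
  {Tg1, Tg2 r p, Tg3 p, Tg4, Jgen p, Qm0, Qm1, Qp0 r p, Qp1} ∪
  {P | ∃ i ≤ r, P = Tg5i i} ∪
  {P | ∃ α : ℕ, α + 1 ≤ r ∧ P = Qp2 α}

/-- The staircase index set `{(i,j) : i + r·j ≤ p, j ≤ q}`. -/
def sIdx (r p q : ℕ) : Finset (ℕ × ℕ) :=
  (Finset.range (p + 1) ×ˢ Finset.range (q + 1)).filter (fun ij => ij.1 + r * ij.2 ≤ p)

/-- The monomial `x^i y^j`. -/
def mm (i j : ℕ) : R2 := Xv ^ i * Yv ^ j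

theorem mm_eq (i j : ℕ) : mm i j = monomial (Finsupp.single 0 i + Finsupp.single 1 j) 1 := by
  simp only [mm, Xv, Yv, X_pow_eq_monomial, monomial_mul, mul_one]

theorem fin2_finsupp (m : Fin 2 →₀ ℕ) :
    Finsupp.single 0 (m 0) + Finsupp.single 1 (m 1) = m := by
  ext i
  fin_cases i <;> simp

theorem end_ext {A B : Module.End ℂ R2} (h : ∀ i j, A (mm i j) = B (mm i j)) : A = B := by
  apply (MvPolynomial.basisMonomials (Fin 2) ℂ).ext
  intro m
  have := h (m 0) (m 1)
  rw [mm_eq, fin2_finsupp] at this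
  simpa using this

/-- coefficient functional -/
def cf (u v : ℕ) : R2 →ₗ[ℂ] ℂ := MvPolynomial.lcoeff ℂ (Finsupp.single 0 u + Finsupp.single 1 v)

theorem cf_mm (u v i j : ℕ) : cf u v (mm i j) = if i = u ∧ j = v then 1 else 0 := by
  rw [mm_eq]
  simp only [cf, lcoeff_apply, coeff_monomial]
  congr 1
  rw [eq_iff_iff]
  constructor
  · intro h
    have h0 := DFunLike.congr_fun h 0
    have h1 := DFunLike.congr_fun h 1
    simp at h0 h1
    exact ⟨h0, h1⟩
  · rintro ⟨rfl, rfl⟩; rfl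

theorem Dx_mm (i j : ℕ) : Dx (mm i j) = (i : ℂ) • mm (i - 1) j := by
  simp [Dx, mm, Xv, Yv, Derivation.leibniz, Derivation.leibniz_pow, pderiv_X,
    MvPolynomial.smul_eq_C_mul]
  try ring

theorem Dy_mm (i j : ℕ) : Dy (mm i j) = (j : ℂ) • mm i (j - 1) := by
  simp [Dy, mm, Xv, Yv, Derivation.leibniz, Derivation.leibniz_pow, pderiv_X,
    MvPolynomial.smul_eq_C_mul]
  try ring

theorem Mf_mm (a b i j : ℕ) : Mf (Xv ^ a * Yv ^ b) (mm i j) = mm (i + a) (j + b) := by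
  simp only [Mf, LinearMap.mulLeft_apply, mm]; ring

theorem Mfx_mm (a i j : ℕ) : Mf (Xv ^ a) (mm i j) = mm (i + a) j := by
  have := Mf_mm a 0 i j; simpa using this

theorem Mfx1_mm (i j : ℕ) : Mf Xv (mm i j) = mm (i + 1) j := by
  have := Mf_mm 1 0 i j; simpa using this

theorem Mfy1_mm (i j : ℕ) : Mf Yv (mm i j) = mm i (j + 1) := by
  have := Mf_mm 0 1 i j; simpa using this

theorem Dxp_mm (s i j : ℕ) : (Dx ^ s) (mm i j) = (i.descFactorial s : ℂ) • mm (i - s) j := by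
  induction s with
  | zero => simp
  | succ s ih =>
    rw [pow_succ', Module.End.mul_apply, ih, map_smul, Dx_mm, smul_smul, Nat.descFactorial_succ,
      Nat.sub_sub]
    push_cast; rw [mul_comm]

theorem Dyp_mm (s i j : ℕ) : (Dy ^ s) (mm i j) = (j.descFactorial s : ℂ) • mm i (j - s) := by
  induction s with
  | zero => simp
  | succ s ih =>
    rw [pow_succ', Module.End.mul_apply, ih, map_smul, Dy_mm, smul_smul, Nat.descFactorial_succ,
      Nat.sub_sub]
    push_cast; rw [mul_comm]

/-- diagonal operator with eigenvalue function `g` -/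
def polyop : (ℕ → ℕ → ℂ) →ₗ[ℂ] Module.End ℂ R2 where
  toFun g := (MvPolynomial.basisMonomials (Fin 2) ℂ).constr ℂ
    (fun m => g (m 0) (m 1) • monomial m (1 : ℂ))
  map_add' g h := by
    rw [← map_add]; congr 1; ext1 m; simp only [Pi.add_apply, add_smul]
  map_smul' c g := by
    rw [← map_smul]; congr 1; ext1 m; simp only [Pi.smul_apply, smul_assoc, RingHom.id_apply]

theorem polyop_mm (g : ℕ → ℕ → ℂ) (i j : ℕ) : polyop g (mm i j) = g i j • mm i j := by
  have h := (MvPolynomial.basisMonomials (Fin 2) ℂ).constr_basis ℂ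
    (fun m => g (m 0) (m 1) • monomial m (1 : ℂ)) (Finsupp.single 0 i + Finsupp.single 1 j)
  rw [coe_basisMonomials] at h
  rw [mm_eq]
  simp only [polyop, LinearMap.coe_mk, AddHom.coe_mk]
  rw [h]; simp

/-- polynomial functions of total degree `< n` -/
def PF (n : ℕ) : Submodule ℂ (ℕ → ℕ → ℂ) :=
  Submodule.span ℂ {g | ∃ s t : ℕ, s + t < n ∧ g = fun i j : ℕ => (i : ℂ) ^ s * (j : ℂ) ^ t}

theorem PF_zero {g : ℕ → ℕ → ℂ} {n : ℕ} (hn : n = 0) (h : g ∈ PF n) : g = 0 := by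
  subst hn
  simpa [PF] using h

theorem PF_prod (n a b : ℕ) (P Q : Polynomial ℂ) (hP : P.natDegree ≤ a) (hQ : Q.natDegree ≤ b)
    (h : a + b < n) : (fun i j : ℕ => P.eval (i : ℂ) * Q.eval (j : ℂ)) ∈ PF n := by
  have : (fun i j : ℕ => P.eval (i : ℂ) * Q.eval (j : ℂ)) =
      ∑ s ∈ Finset.range (P.natDegree + 1), ∑ t ∈ Finset.range (Q.natDegree + 1),
        (P.coeff s * Q.coeff t) • (fun i j : ℕ => (i : ℂ) ^ s * (j : ℂ) ^ t) := by
    ext i j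
    simp only [Finset.sum_apply, Pi.smul_apply, smul_eq_mul]
    rw [Polynomial.eval_eq_sum_range, Polynomial.eval_eq_sum_range, Finset.sum_mul_sum]
    refine Finset.sum_congr rfl fun s _ => Finset.sum_congr rfl fun t _ => by ring
  rw [this]
  refine Submodule.sum_mem _ fun s hs => Submodule.sum_mem _ fun t ht => Submodule.smul_mem _ _ ?_
  simp only [Finset.mem_range] at hs ht
  exact Submodule.subset_span ⟨s, t, by omega, rfl⟩

theorem PF_div (r n : ℕ) (L : ℂ) (g : ℕ → ℕ → ℂ) (hg : g ∈ PF n) :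
    ∃ h ∈ PF (n - 1), ∃ g0 ∈ Polynomial.degreeLT ℂ n,
      ∀ i j : ℕ, g i j = ((i : ℂ) + r * j - L) * h i j + Polynomial.eval (j : ℂ) g0 := by
  induction hg using Submodule.span_induction with
  | mem x hx =>
    obtain ⟨s, t, hst, rfl⟩ := hx
    have hd1 : (Polynomial.C L - Polynomial.C (r : ℂ) * Polynomial.X).natDegree ≤ 1 := by
      compute_degree
    refine ⟨∑ u ∈ Finset.range s, (fun i j : ℕ => Polynomial.eval (i : ℂ) (Polynomial.X ^ u) *
      Polynomial.eval (j : ℂ) ((Polynomial.C L - Polynomial.C (r : ℂ) * Polynomial.X) ^ (s - 1 - u) * Polynomial.X ^ t)), ?_, 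
      (Polynomial.C L - Polynomial.C (r : ℂ) * Polynomial.X) ^ s * Polynomial.X ^ t, ?_, ?_⟩
    · refine Submodule.sum_mem _ fun u hu => ?_
      simp only [Finset.mem_range] at hu
      refine PF_prod _ u ((s - 1 - u) + t) _ _ (by simp) ?_ (by omega)
      refine Polynomial.natDegree_mul_le_of_le ?_ (by simp)
      have := Polynomial.natDegree_pow_le_of_le (s - 1 - u) hd1
      simpa using this
    · rw [Polynomial.mem_degreeLT]
      refine lt_of_le_of_lt Polynomial.degree_le_natDegree ?_
      have := Polynomial.natDegree_pow_le_of_le s hd1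
      have h2 : ((Polynomial.C L - Polynomial.C (r : ℂ) * Polynomial.X) ^ s * Polynomial.X ^ t).natDegree ≤ s * 1 + t :=
        Polynomial.natDegree_mul_le_of_le this (by simp)
      exact_mod_cast lt_of_le_of_lt h2 (by omega)
    · intro i j
      simp only [Finset.sum_apply, Polynomial.eval_mul, Polynomial.eval_pow, Polynomial.eval_sub,
        Polynomial.eval_C, Polynomial.eval_X]
      have := (Commute.all (i : ℂ) (L - r * j)).geom_sum₂_mul s
      simp only [← mul_assoc, ← Finset.sum_mul]
      linear_combination (-(j : ℂ) ^ t) * this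
  | zero => exact ⟨0, zero_mem _, 0, zero_mem _, by simp⟩
  | add x y _ _ hx hy =>
    obtain ⟨h, hh, g0, hg0, H⟩ := hx
    obtain ⟨h', hh', g0', hg0', H'⟩ := hy
    refine ⟨h + h', add_mem hh hh', g0 + g0', add_mem hg0 hg0', fun i j => ?_⟩
    simp only [Pi.add_apply, Polynomial.eval_add, H, H']; ring
  | smul c x _ hx =>
    obtain ⟨h, hh, g0, hg0, H⟩ := hx
    refine ⟨c • h, Submodule.smul_mem _ _ hh, c • g0, Submodule.smul_mem _ _ hg0, fun i j => ?_⟩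
    simp only [Pi.smul_apply, Polynomial.eval_smul, H, smul_eq_mul]; ring

theorem PF_step (r n d M L : ℕ) (g : ℕ → ℕ → ℂ) (hg : g ∈ PF n)
    (hM : r * M ≤ L)
    (hv : ∀ i j, d ≤ j → j ≤ M → i + r * j = L → g i j = 0) :
    ∃ h ∈ PF (n - 1),
      (∀ i j : ℕ, d ≤ j → j ≤ M → g i j = ((i : ℂ) + r * j - L) * h i j) ∧
      (n + d ≤ M + 1 → ∀ i j : ℕ, g i j = ((i : ℂ) + r * j - L) * h i j) := by
  obtain ⟨h, hh, g0, hg0, H⟩ := PF_div r n L g hg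
  have hz : ∀ j, d ≤ j → j ≤ M → Polynomial.eval (j : ℂ) g0 = 0 := by
    intro j hj hj'
    have h1 : r * j ≤ r * M := Nat.mul_le_mul_left _ hj'
    have h2 := hv (L - r * j) j hj hj' (by omega)
    rw [H, Nat.cast_sub (by omega)] at h2
    push_cast at h2
    simpa using h2
  refine ⟨h, hh, fun i j hj hj' => by rw [H, hz j hj hj', add_zero], fun hn => ?_⟩
  have : g0 = 0 := by
    refine Polynomial.eq_zero_of_degree_lt_of_eval_finset_eq_zero
      ((Finset.Icc d M).image (fun j : ℕ => (j : ℂ))) ?_ ?_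
    · rw [Finset.card_image_of_injective _ Nat.cast_injective, Nat.card_Icc]
      refine lt_of_lt_of_le (Polynomial.mem_degreeLT.1 hg0) ?_
      exact_mod_cast (by omega)
    · intro x hx
      simp only [Finset.mem_image, Finset.mem_Icc] at hx
      obtain ⟨j, ⟨h1, h2⟩, rfl⟩ := hx
      exact hz j h1 h2
  intro i j; rw [H, this]; simp

/-- the product of linear factors -/
def lf (r L m i j : ℕ) : ℂ := ∏ t ∈ Finset.range m, ((i : ℂ) + r * j - L + t)

theorem lf_zero {r L m i j : ℕ} (h1 : i + r * j ≤ L) (h2 : L < i + r * j + m) :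
    lf r L m i j = 0 := by
  refine Finset.prod_eq_zero (i := L - (i + r * j)) (by simp; omega) ?_
  rw [Nat.cast_sub h1]; push_cast; ring

theorem PF_iter (r n d q L m : ℕ) (hr : 1 ≤ r) (g : ℕ → ℕ → ℂ) (hg : g ∈ PF n)
    (hv : ∀ i j t, t < m → d ≤ j → j ≤ q → i + r * j + t = L → g i j = 0) :
    ∃ h ∈ PF (n - m),
      (∀ i j : ℕ, d ≤ j → j ≤ q → i + r * j ≤ L → g i j = lf r L m i j * h i j) ∧
      (n + d ≤ q + 1 → r * q ≤ L → ∀ i j : ℕ, g i j = lf r L m i j * h i j) := by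
  induction m with
  | zero => exact ⟨g, hg, by simp [lf], by simp [lf]⟩
  | succ m ih =>
    obtain ⟨h, hh, H1, H2⟩ := ih fun i j t ht => hv i j t (by omega)
    by_cases hLm : L < m
    · refine ⟨0, zero_mem _, fun i j h1 h2 h3 => ?_, fun h1 h2 i j => ?_⟩
      · rw [H1 i j h1 h2 h3, lf_zero h3 (by omega)]; simp
      · have : q ≤ r * q := Nat.le_mul_of_pos_left _ hr
        rw [H2 h1 h2, PF_zero (by omega) hh]; simp
    · push Not at hLm
      set M := min q ((L - m) / r) with hMdef
      have hM1 : r * ((L - m) / r) ≤ L - m := Nat.mul_div_le _ _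
      have hM2 : r * M ≤ L - m := le_trans (Nat.mul_le_mul_left _ (min_le_right _ _)) hM1
      obtain ⟨h', hh', K1, K2⟩ := PF_step r (n - m) d M (L - m) h hh hM2 (by
        intro i j hj hj' hij
        have hjq : j ≤ q := le_trans hj' (min_le_left _ _)
        have e := H1 i j hj hjq (by omega)
        rw [hv i j m (by omega) hj hjq (by omega)] at e
        refine (mul_eq_zero.1 e.symm).resolve_left ?_
        refine Finset.prod_ne_zero_iff.2 fun t ht => ?_
        simp only [Finset.mem_range] at ht
        have : (L : ℂ) = i + r * j + m := by exact_mod_cast (by omega : L = i + r * j + m)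
        rw [this]
        intro h0
        have : (t : ℂ) = m := by linear_combination h0
        have : t = m := by exact_mod_cast this
        omega)
      have key : ∀ i j : ℕ, lf r L (m + 1) i j * h' i j =
          lf r L m i j * (((i : ℂ) + r * j - (L - m : ℕ)) * h' i j) := by
        intro i j
        rw [lf, Finset.prod_range_succ, ← lf, Nat.cast_sub hLm]; ring
      refine ⟨h', by rw [Nat.sub_sub] at hh'; exact hh', fun i j h1 h2 h3 => ?_, fun h1 h2 i j => ?_⟩
      · rw [key]
        rw [H1 i j h1 h2 h3]
        by_cases hc : i + r * j ≤ L - m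
        · rw [← K1 i j h1]
          rw [hMdef, le_min_iff]
          refine ⟨h2, (Nat.le_div_iff_mul_le (by omega)).2 ?_⟩
          rw [mul_comm]; omega
        · rw [lf_zero h3 (by omega)]; simp
      · rw [key, H2 h1 h2]
        by_cases hmq : n ≤ m
        · rw [PF_zero (n := n - m) (g := h) (by omega) hh, PF_zero (by omega) hh']; simp
        · rw [← K2]
          have : q - m ≤ (L - m) / r := by
            rw [Nat.le_div_iff_mul_le (by omega)]
            have : m ≤ m * r := Nat.le_mul_of_pos_right _ hr
            rw [Nat.sub_mul, mul_comm q]; omega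
          omega

/-- homogeneous operators of bidegree `κ` -/
def hop (κ : ℤ × ℤ) : (ℕ → ℕ → ℂ) →ₗ[ℂ] Module.End ℂ R2 :=
  LinearMap.mulLeft ℂ (Mf (Xv ^ κ.1.toNat * Yv ^ κ.2.toNat) *
    Dx ^ (-κ.1).toNat * Dy ^ (-κ.2).toNat) ∘ₗ polyop

theorem hop_mm (κ : ℤ × ℤ) (g : ℕ → ℕ → ℂ) (i j : ℕ) : hop κ g (mm i j) =
    (g i j * (i.descFactorial (-κ.1).toNat : ℂ) * (j.descFactorial (-κ.2).toNat : ℂ)) •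
      mm (i - (-κ.1).toNat + κ.1.toNat) (j - (-κ.2).toNat + κ.2.toNat) := by
  simp only [hop, LinearMap.comp_apply, LinearMap.mulLeft_apply, Module.End.mul_apply, polyop_mm,
    map_smul, Dyp_mm, Dxp_mm, Mf_mm, smul_smul]
  congr 1; ring

/-- homogeneous operators of bidegree `κ` and order `< n` -/
def HH (n : ℕ) (κ : ℤ × ℤ) : Submodule ℂ (Module.End ℂ R2) :=
  (PF (n - (-κ.1).toNat - (-κ.2).toNat)).map (hop κ)

/-- shifted falling factorial polynomial -/
def shp (B s : ℕ) : Polynomial ℂ := (descPochhammer ℂ (s - B)).comp (Polynomial.X - Polynomial.C (B : ℂ))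

theorem shp_deg (B s : ℕ) : (shp B s).natDegree ≤ s - B := by
  refine le_trans Polynomial.natDegree_comp_le ?_
  rw [descPochhammer_natDegree]
  calc (s - B) * _ ≤ (s - B) * 1 := Nat.mul_le_mul_left _ (by compute_degree)
    _ = _ := mul_one _

theorem shp_eval (B s i : ℕ) (h : B ≤ s) :
    (shp B s).eval (i : ℂ) * (i.descFactorial B : ℂ) = (i.descFactorial s : ℂ) := by
  by_cases hi : i < B
  · rw [Nat.descFactorial_eq_zero_iff_lt.2 hi, Nat.descFactorial_eq_zero_iff_lt.2 (by omega)]; simp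
  · push Not at hi
    rw [← Nat.descFactorial_mul_descFactorial h, shp, Polynomial.eval_comp]
    simp only [Polynomial.eval_sub, Polynomial.eval_X, Polynomial.eval_C]
    rw [← Nat.cast_sub hi, descPochhammer_eval_eq_descFactorial]
    push_cast; rfl

theorem term_mem (k α β s t : ℕ) (hst : s + t ≤ k) :
    Mf (Xv ^ α * Yv ^ β) * Dx ^ s * Dy ^ t ∈ ⨆ κ, HH (k + 1) κ := by
  refine Submodule.mem_iSup_of_mem ((α : ℤ) - s, (β : ℤ) - t) ?_
  refine ⟨fun i j : ℕ => (shp (-((α : ℤ) - s)).toNat s).eval (i : ℂ) *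
    (shp (-((β : ℤ) - t)).toNat t).eval (j : ℂ), ?_, ?_⟩
  · refine PF_prod _ _ _ _ _ (shp_deg _ _) (shp_deg _ _) ?_
    simp only
    omega
  · apply end_ext
    intro i j
    rw [hop_mm]
    simp only [Module.End.mul_apply, Dyp_mm, Dxp_mm, map_smul, Mf_mm, smul_smul]
    have h1 := shp_eval (-((α : ℤ) - s)).toNat s i (by omega)
    have h2 := shp_eval (-((β : ℤ) - t)).toNat t j (by omega)
    rw [← h1, ← h2]
    by_cases hi : i < s
    · rw [show (shp (-((α : ℤ) - s)).toNat s).eval (i : ℂ) * (i.descFactorial (-((α : ℤ) - s)).toNat : ℂ) = 0 by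
        rw [h1, Nat.descFactorial_eq_zero_iff_lt.2 hi]; simp]
      rw [mul_right_comm (Polynomial.eval _ _)]
      rw [show (shp (-((α : ℤ) - s)).toNat s).eval (i : ℂ) * (i.descFactorial (-((α : ℤ) - s)).toNat : ℂ) = 0 by
        rw [h1, Nat.descFactorial_eq_zero_iff_lt.2 hi]; simp]
      simp
    by_cases hj : j < t
    · have h3 : (shp (-((β : ℤ) - t)).toNat t).eval (j : ℂ) * (j.descFactorial (-((β : ℤ) - t)).toNat : ℂ) = 0 := by
        rw [h2, Nat.descFactorial_eq_zero_iff_lt.2 hj]; simp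
      rw [mul_right_comm (Polynomial.eval _ _), mul_assoc _ (Polynomial.eval _ _), h3]
      simp
    congr 1
    · ring
    · congr 1 <;> omega

theorem diffOp_mem (k : ℕ) (F : Finset (ℕ × ℕ)) (f : ℕ × ℕ → R2)
    (h : ∀ ij : ℕ × ℕ, k < ij.1 + ij.2 → f ij = 0) : diffOp F f ∈ ⨆ κ, HH (k + 1) κ := by
  refine Submodule.sum_mem _ fun ij _ => ?_
  by_cases hk : k < ij.1 + ij.2
  · rw [h ij hk]
    have : Mf 0 = 0 := by refine LinearMap.ext fun x => ?_; simp [Mf]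
    rw [this]; simp
  · push Not at hk
    generalize f ij = P
    induction P using MvPolynomial.induction_on' with
    | monomial m c =>
      have : Mf (monomial m c) = c • Mf (Xv ^ (m 0) * Yv ^ (m 1)) := by
        have e := mm_eq (m 0) (m 1)
        rw [fin2_finsupp] at e
        rw [← mm, e]
        refine LinearMap.ext fun x => ?_
        simp [Mf, smul_monomial, ← smul_mul_assoc]
      rw [this, smul_mul_assoc, smul_mul_assoc]
      exact Submodule.smul_mem _ _ (term_mem k _ _ _ _ hk)
    | add a b ha hb =>
      have : Mf (a + b) = Mf a + Mf b := by refine LinearMap.ext fun x => ?_; simp [Mf, add_mul]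
      rw [this, add_mul, add_mul]
      exact add_mem ha hb

theorem cf_Smod {r p q : ℕ} {w : R2} (hw : w ∈ Smod r p q) {u v : ℕ} (h : p < u + r * v) :
    cf u v w = 0 := by
  induction hw using Submodule.span_induction with
  | mem x hx =>
    obtain ⟨i, j, h1, h2, rfl⟩ := hx
    rw [← mm, cf_mm, if_neg]
    rintro ⟨rfl, rfl⟩; omega
  | zero => simp
  | add x y _ _ hx hy => rw [map_add, hx, hy, add_zero]
  | smul c x _ hx => rw [map_smul, hx, smul_zero]

theorem cf_nonpos {w : R2} {b : ℕ}
    (hw : w ∈ Submodule.span ℂ {P : R2 | ∃ c e : ℕ, e ≤ b ∧ P = Xv ^ c * Yv ^ e})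
    {u v : ℕ} (h : b < v) : cf u v w = 0 := by
  induction hw using Submodule.span_induction with
  | mem x hx =>
    obtain ⟨i, j, h1, rfl⟩ := hx
    rw [← mm, cf_mm, if_neg]
    rintro ⟨rfl, rfl⟩; omega
  | zero => simp
  | add x y _ _ hx hy => rw [map_add, hx, hy, add_zero]
  | smul c x _ hx => rw [map_smul, hx, smul_zero]

/-- the homogeneous statement -/
def Approx (r P q k : ℕ) (AA : Submodule ℂ (Module.End ℂ R2)) (T : Module.End ℂ R2) : Prop :=
  ∃ A ∈ AA, (∀ i j, j ≤ q → i + r * j ≤ P → T (mm i j) = A (mm i j)) ∧ (k ≤ q → T = A)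

theorem scalar (r P p' q k : ℕ) (AA : Submodule ℂ (Module.End ℂ R2))
    (hh : ∀ (a : ℤ) (d : ℕ) (g : ℕ → ℕ → ℂ), g ∈ PF (k + 1 - (-a).toNat - d) →
      (∀ i j : ℕ, d ≤ j → j ≤ q → i + r * j ≤ P → (p' : ℤ) + r * d < i + a + r * j → 0 ≤ a →
        g i j = 0) → Approx r P q k AA (hop (a, -(d : ℤ)) g))
    (T : Module.End ℂ R2) (hT : T ∈ ⨆ κ, HH (k + 1) κ) (hy : NonposY T)
    (hpres : ∀ w ∈ Smod r P q, T w ∈ Smod r p' q) : Approx r P q k AA T := by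
  obtain ⟨f, hf, hsum⟩ := (Submodule.mem_iSup_iff_exists_finsupp _ _).1 hT
  choose g hg hgf using hf
  -- coefficient extraction
  have hco : ∀ κ : ℤ × ℤ, ∀ i j : ℕ, κ ∈ f.support → (-κ.1).toNat ≤ i → (-κ.2).toNat ≤ j →
      cf (i - (-κ.1).toNat + κ.1.toNat) (j - (-κ.2).toNat + κ.2.toNat) (T (mm i j)) = 0 →
      g κ i j = 0 := by
    intro κ i j hκ hi hj h0
    rw [← hsum, Finsupp.sum, LinearMap.sum_apply, map_sum, Finset.sum_eq_single κ] at h0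
    · rw [← hgf, hop_mm, map_smul, cf_mm, if_pos ⟨rfl, rfl⟩] at h0
      simp only [smul_eq_mul, mul_one] at h0
      have n1 : (i.descFactorial (-κ.1).toNat : ℂ) ≠ 0 := by
        rw [Nat.cast_ne_zero, Ne, Nat.descFactorial_eq_zero_iff_lt]; omega
      have n2 : (j.descFactorial (-κ.2).toNat : ℂ) ≠ 0 := by
        rw [Nat.cast_ne_zero, Ne, Nat.descFactorial_eq_zero_iff_lt]; omega
      simpa [n1, n2] using h0
    · intro κ' _ hne
      rw [← hgf, hop_mm, map_smul, cf_mm]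
      by_cases hi' : i < (-κ'.1).toNat
      · rw [Nat.descFactorial_eq_zero_iff_lt.2 hi']; simp
      by_cases hj' : j < (-κ'.2).toNat
      · rw [Nat.descFactorial_eq_zero_iff_lt.2 hj']; simp
      rw [if_neg, smul_zero]
      rintro ⟨h1, h2⟩
      exact hne (Prod.ext (by omega) (by omega))
    · intro h; exact absurd hκ h
  have hap : ∀ κ ∈ f.support, Approx r P q k AA (f κ) := by
    intro κ hκ
    by_cases he : 0 < κ.2
    · have : f κ = 0 := by
        rw [← hgf]
        apply end_ext
        intro i j
        rw [hop_mm]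
        by_cases hi' : i < (-κ.1).toNat
        · rw [Nat.descFactorial_eq_zero_iff_lt.2 hi']; simp
        · rw [hco κ i j hκ (by omega) (by omega) (cf_nonpos (hy i j) (by omega))]; simp
      exact ⟨0, zero_mem _, fun i j _ _ => by rw [this], fun _ => this⟩
    · obtain ⟨a, e⟩ := κ
      obtain ⟨d, rfl⟩ : ∃ d : ℕ, e = -(d : ℤ) := ⟨(-e).toNat, by simp at he; omega⟩
      rw [← hgf]
      refine hh a d _ (by simpa using hg (a, -(d : ℤ))) ?_
      intro i j h1 h2 h3 h4 ha
      refine hco (a, -(d : ℤ)) i j hκ (by simp only; omega) (by simp only; omega) ?_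
      refine cf_Smod (hpres (mm i j) (Submodule.subset_span ⟨i, j, h3, h2, rfl⟩)) ?_
      simp only
      have e1 : (j - (- -(d : ℤ)).toNat + (-(d : ℤ)).toNat) = j - d := by omega
      rw [e1]
      zify [h1]
      rw [mul_sub]
      have : ((i - (-a).toNat : ℕ) : ℤ) + a.toNat = i + a := by omega
      omega
  choose! A hA1 hA2 hA3 using hap
  refine ⟨∑ κ ∈ f.support, A κ, Submodule.sum_mem _ hA1, fun i j h1 h2 => ?_, fun hk => ?_⟩
  · rw [← hsum, Finsupp.sum, LinearMap.sum_apply, LinearMap.sum_apply]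
    exact Finset.sum_congr rfl fun κ hκ => hA2 κ hκ i j h1 h2
  · rw [← hsum, Finsupp.sum]
    exact Finset.sum_congr rfl fun κ hκ => hA3 κ hκ hk

theorem PF_mono {a b : ℕ} (h : a ≤ b) : PF a ≤ PF b := by
  refine Submodule.span_mono ?_
  rintro _ ⟨s, t, hst, rfl⟩
  exact ⟨s, t, by omega, rfl⟩

section pw
variable {E : Type*} [Ring E] [Algebra ℂ E]

theorem sm_mul {M : Submodule ℂ E} {a b n : ℕ} (hab : a + b = n) {x y : E} (hx : x ∈ M ^ a)
    (hy : y ∈ M ^ b) : x * y ∈ M ^ n := by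
  rw [← hab, pow_add]; exact Submodule.mul_mem_mul hx hy

theorem sm_pow {M : Submodule ℂ E} {x : E} (hx : x ∈ M) (a : ℕ) : x ^ a ∈ M ^ a :=
  Submodule.pow_mem_pow _ hx _

theorem sm_mono {M : Submodule ℂ E} (h1 : (1 : E) ∈ M) {a b : ℕ} (hab : a ≤ b) {x : E}
    (hx : x ∈ M ^ a) : x ∈ M ^ b := by
  have : x * 1 ^ (b - a) ∈ M ^ b := sm_mul (by omega) hx (sm_pow h1 _)
  simpa using this

theorem sm_one {M : Submodule ℂ E} {x : E} (hx : x ∈ M) : x ∈ M ^ 1 := by simpa using hx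

theorem sm_zero {M : Submodule ℂ E} {x : E} (hx : x ∈ M ^ 0) : ∃ c : ℂ, x = c • (1 : E) := by
  rw [pow_zero] at hx
  obtain ⟨c, rfl⟩ := Submodule.mem_one.1 hx
  exact ⟨c, Algebra.algebraMap_eq_smul_one c⟩

theorem sm_zero' {M : Submodule ℂ E} (c : ℂ) : c • (1 : E) ∈ M ^ 0 := by
  rw [pow_zero]
  exact Submodule.mem_one.2 ⟨c, Algebra.algebraMap_eq_smul_one c⟩

theorem sm_ind {M : Submodule ℂ E} {n : ℕ} {p : E → Prop}
    (hm : ∀ x ∈ M ^ n, ∀ y ∈ M, p (x * y)) (ha : ∀ x y, p x → p y → p (x + y)) {x : E}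
    (hx : x ∈ M ^ (n + 1)) : p x := by
  rw [pow_succ] at hx
  exact Submodule.mul_induction_on hx hm ha

theorem sm_words (S : Set E) (n : ℕ) : (Submodule.span ℂ ({1} ∪ S)) ^ n ≤
    Submodule.span ℂ {P | ∃ l : List E, l.length ≤ n ∧ (∀ a ∈ l, a ∈ S) ∧ l.prod = P} := by
  induction n with
  | zero =>
    intro x hx
    obtain ⟨c, rfl⟩ := sm_zero hx
    exact Submodule.smul_mem _ _ (Submodule.subset_span ⟨[], by simp, by simp, by simp⟩)
  | succ n ih =>
    rw [pow_succ]
    refine le_trans (mul_le_mul' ih le_rfl) ?_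
    rw [Submodule.span_mul_span]
    refine Submodule.span_mono ?_
    rintro _ ⟨x, ⟨l, h1, h2, rfl⟩, y, hy, rfl⟩
    rcases hy with hy | hy
    · have : y = 1 := by simpa using hy
      subst this
      exact ⟨l, by omega, h2, by simp⟩
    · refine ⟨l ++ [y], by simp; omega, ?_, by simp⟩
      intro a ha
      rw [List.mem_append, List.mem_singleton] at ha
      rcases ha with ha | rfl
      · exact h2 a ha
      · exact hy
end pw

/-- span of the identity and the scalar generators -/
def FW (r P : ℕ) : Submodule ℂ (Module.End ℂ R2) := Submodule.span ℂ ({1} ∪ Wset r P)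

theorem FW_one (r P : ℕ) : (1 : Module.End ℂ R2) ∈ FW r P := Submodule.subset_span (by simp)
theorem FW_Dx (r P : ℕ) : Dx ∈ FW r P := Submodule.subset_span (by simp [Wset, W1])
theorem FW_W2 (r P : ℕ) : W2 r P ∈ FW r P := Submodule.subset_span (by simp [Wset])
theorem FW_W4 (r P : ℕ) : Mf Yv * Dy ∈ FW r P := Submodule.subset_span (by simp [Wset, W4])
theorem FW_W3 (r P : ℕ) : Mf Xv * Dx ∈ FW r P := by
  have h : W3 P ∈ FW r P := Submodule.subset_span (by simp [Wset])
  have := add_mem h (Submodule.smul_mem _ ((P : ℂ) / 2) (FW_one r P))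
  simpa [W3] using this
theorem FW_W5 (r P i : ℕ) (h : i ≤ r) : Mf (Xv ^ i) * Dy ∈ FW r P :=
  Submodule.subset_span (Or.inr (Or.inr ⟨i, h, rfl⟩))

/-- basic homogeneous operator -/
def UU (A B d : ℕ) : Module.End ℂ R2 := Mf (Xv ^ A) * Dx ^ B * Dy ^ d

theorem UU_mm (A B d i j : ℕ) : UU A B d (mm i j) =
    ((i.descFactorial B : ℂ) * (j.descFactorial d : ℂ)) • mm (i - B + A) (j - d) := by
  simp only [UU, Module.End.mul_apply, Dyp_mm, Dxp_mm, map_smul, Mfx_mm, smul_smul]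
  congr 1; ring

theorem hop_eq (a : ℤ) (d : ℕ) (g : ℕ → ℕ → ℂ) :
    hop (a, -(d : ℤ)) g = UU a.toNat (-a).toNat d * polyop g := by
  apply end_ext; intro i j
  rw [hop_mm, Module.End.mul_apply, polyop_mm, map_smul, UU_mm, smul_smul]
  simp [mul_assoc]

theorem xD_mem (r P d A : ℕ) (h : A ≤ r * d) : Mf (Xv ^ A) * Dy ^ d ∈ FW r P ^ d := by
  induction d generalizing A with
  | zero =>
    have : A = 0 := by simpa using h
    subst this
    have : Mf (Xv ^ 0) = 1 := by refine LinearMap.ext fun x => ?_; simp [Mf]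
    rw [this]; simp
  | succ d ih =>
    have e : Mf (Xv ^ A) * Dy ^ (d + 1) =
        (Mf (Xv ^ (min A (r * d))) * Dy ^ d) * (Mf (Xv ^ (A - min A (r * d))) * Dy) := by
      apply end_ext; intro i j
      simp only [pow_succ, Module.End.mul_apply, Dyp_mm, Dy_mm, map_smul]
      simp only [Mfx_mm, Dyp_mm, map_smul]
      congr 3
      omega
    rw [e]
    refine sm_mul rfl (ih _ (min_le_right _ _)) (sm_one (FW_W5 _ _ _ ?_))
    rw [mul_add] at h
    omega

theorem UU_mem (r P A B d n : ℕ) (h : A ≤ r * d) (hn : d + B = n) : UU A B d ∈ FW r P ^ n := by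
  have e : UU A B d = (Mf (Xv ^ A) * Dy ^ d) * Dx ^ B := by
    apply end_ext; intro i j
    rw [UU_mm]
    simp only [Module.End.mul_apply, Dyp_mm, Dxp_mm, map_smul, Mfx_mm, smul_smul]
  rw [e]
  exact sm_mul hn (xD_mem r P d A h) (sm_pow (FW_Dx r P) B)

theorem xDxp (s i j : ℕ) : ((Mf Xv * Dx) ^ s) (mm i j) = ((i : ℂ) ^ s) • mm i j := by
  induction s with
  | zero => simp
  | succ s ih =>
    rw [pow_succ', Module.End.mul_apply, ih, map_smul, Module.End.mul_apply, Dx_mm, map_smul, Mfx1_mm, smul_smul, pow_succ]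
    rcases i with _ | i
    · simp
    · simp

theorem yDyp (s i j : ℕ) : ((Mf Yv * Dy) ^ s) (mm i j) = ((j : ℂ) ^ s) • mm i j := by
  induction s with
  | zero => simp
  | succ s ih =>
    rw [pow_succ', Module.End.mul_apply, ih, map_smul, Module.End.mul_apply, Dy_mm, map_smul, Mfy1_mm, smul_smul, pow_succ]
    rcases j with _ | i
    · simp
    · simp

theorem polyop_mem (r P n : ℕ) (g : ℕ → ℕ → ℂ) (hg : g ∈ PF n) :
    polyop g ∈ FW r P ^ (n - 1) := by
  induction hg using Submodule.span_induction with
  | mem x hx =>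
    obtain ⟨s, t, hst, rfl⟩ := hx
    have e : polyop (fun i j : ℕ => (i : ℂ) ^ s * (j : ℂ) ^ t) =
        (Mf Xv * Dx) ^ s * (Mf Yv * Dy) ^ t := by
      apply end_ext; intro i j
      rw [polyop_mm, Module.End.mul_apply, yDyp, map_smul, xDxp, smul_smul, mul_comm]
    rw [e]
    refine sm_mono (FW_one r P) (by omega : s + t ≤ n - 1) ?_
    exact sm_mul rfl (sm_pow (FW_W3 r P) s) (sm_pow (FW_W4 r P) t)
  | zero => simp
  | add x y _ _ hx hy => rw [map_add]; exact add_mem hx hy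
  | smul c x _ hx => rw [map_smul]; exact Submodule.smul_mem _ _ hx

theorem L1 (r P k A B d n : ℕ) (h : A ≤ r * d) (g : ℕ → ℕ → ℂ) (hg : g ∈ PF n)
    (hn : n + B + d ≤ k + 1 ∨ n = 0) : UU A B d * polyop g ∈ FW r P ^ k := by
  by_cases h0 : n = 0
  · rw [PF_zero h0 hg]; simp
  · refine sm_mono (FW_one r P) ?_ (sm_mul rfl (UU_mem r P A B d _ h rfl) (polyop_mem r P _ g hg))
    omega

theorem lead_mm (r P i j : ℕ) : (Mf Xv * Dx + (r : ℂ) • (Mf Yv * Dy) - (P : ℂ) • 1) (mm i j) =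
    ((i : ℂ) + r * j - P) • mm i j := by
  have h1 := xDxp 1 i j
  have h2 := yDyp 1 i j
  simp only [pow_one] at h1 h2
  simp only [LinearMap.add_apply, LinearMap.sub_apply, LinearMap.smul_apply, h1, h2,
    Module.End.one_apply]
  module

theorem W2_mm (r P i j : ℕ) : W2 r P (mm i j) = ((i : ℂ) + r * j - P) • mm (i + 1) j := by
  have e : W2 r P = Mf Xv * (Mf Xv * Dx + (r : ℂ) • (Mf Yv * Dy) - (P : ℂ) • 1) := by
    refine LinearMap.ext fun x => ?_
    simp only [W2, Mf, LinearMap.add_apply, LinearMap.sub_apply, LinearMap.smul_apply,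
      Module.End.mul_apply, LinearMap.mulLeft_apply, Module.End.one_apply, MvPolynomial.smul_eq_C_mul]
    ring
  rw [e, Module.End.mul_apply, lead_mm, map_smul, Mfx1_mm]

theorem W2p_mm (r P m i j : ℕ) : (W2 r P ^ m) (mm i j) = lf r P m i j • mm (i + m) j := by
  induction m with
  | zero => simp [lf]
  | succ m ih =>
    rw [pow_succ', Module.End.mul_apply, ih, map_smul, W2_mm, smul_smul, lf, lf,
      Finset.prod_range_succ]
    congr 1
    push_cast; ring

/-- raising operators -/
def UV (r P d m : ℕ) (h : ℕ → ℕ → ℂ) : Module.End ℂ R2 :=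
  UU (r * d) 0 d * (W2 r P ^ m * polyop h)

theorem UV_mm (r P d m i j : ℕ) (h : ℕ → ℕ → ℂ) : UV r P d m h (mm i j) =
    (lf r P m i j * h i j * (j.descFactorial d : ℂ)) • mm (i + (r * d + m)) (j - d) := by
  simp only [UV, Module.End.mul_apply, polyop_mm, map_smul, W2p_mm, UU_mm, smul_smul]
  simp only [Nat.descFactorial_zero, Nat.cast_one, one_mul, Nat.sub_zero]
  congr 1
  · ring
  · congr 1; ring

theorem UV_mem (r P k d m : ℕ) (h : ℕ → ℕ → ℂ) (hh : h ∈ PF (k + 1 - d - m)) :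
    UV r P d m h ∈ FW r P ^ k := by
  by_cases h0 : k + 1 - d - m = 0
  · rw [UV, PF_zero h0 hh]; simp
  · refine sm_mono (FW_one r P) ?_ (sm_mul rfl (UU_mem r P _ 0 d _ le_rfl rfl)
      (sm_mul rfl (sm_pow (FW_W2 r P) m) (polyop_mem r P _ h hh)))
    omega

theorem con (r P q k : ℕ) (hr : 1 ≤ r) (hq : r * q ≤ P) (AA : Submodule ℂ (Module.End ℂ R2))
    (a d m : ℕ) (g : ℕ → ℕ → ℂ) (hg : g ∈ PF (k + 1 - d))
    (hv : ∀ i j t, t < m → d ≤ j → j ≤ q → i + r * j + t = P → g i j = 0)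
    (hop' : ∀ h ∈ PF (k + 1 - d - m), ∃ T' ∈ AA, ∀ i j, T' (mm i j) =
      (lf r P m i j * h i j * (j.descFactorial d : ℂ)) • mm (i + a) (j - d)) :
    Approx r P q k AA (hop ((a : ℤ), -(d : ℤ)) g) := by
  obtain ⟨h, hh, H1, H2⟩ := PF_iter r _ d q P m hr g hg hv
  by_cases hd : k + 1 ≤ d
  · rw [PF_zero (by omega) hg, map_zero]
    exact ⟨0, zero_mem _, fun _ _ _ _ => rfl, fun _ => rfl⟩
  obtain ⟨T', hT', HT⟩ := hop' h hh
  have e : ∀ i j, hop ((a : ℤ), -(d : ℤ)) g (mm i j) =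
      (g i j * (j.descFactorial d : ℂ)) • mm (i + a) (j - d) := by
    intro i j
    rw [hop_mm]; simp
  refine ⟨T', hT', fun i j h1 h2 => ?_, fun hk => ?_⟩
  · rw [e, HT]
    by_cases hj : j < d
    · rw [Nat.descFactorial_eq_zero_iff_lt.2 hj]; simp
    · rw [H1 i j (by omega) h1 h2]
  · apply end_ext; intro i j
    rw [e, HT, ← H2 (by omega) hq]

theorem hom0 (r P q k : ℕ) (hr : 1 ≤ r) (hq : r * q ≤ P) (AA : Submodule ℂ (Module.End ℂ R2))
    (hAA : ∀ A ∈ FW r P ^ k, A ∈ AA) (a : ℤ) (d : ℕ) (g : ℕ → ℕ → ℂ)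
    (hg : g ∈ PF (k + 1 - (-a).toNat - d))
    (hv : ∀ i j : ℕ, d ≤ j → j ≤ q → i + r * j ≤ P → (P : ℤ) + r * d < i + a + r * j → 0 ≤ a →
        g i j = 0) : Approx r P q k AA (hop (a, -(d : ℤ)) g) := by
  by_cases ha : a ≤ r * d
  · refine ⟨_, hAA _ (L1 r P k a.toNat (-a).toNat d _ ?_ g hg (by omega)), fun i j _ _ => ?_,
      fun _ => hop_eq _ _ _⟩
    · have : (0 : ℤ) ≤ r * d := by positivity
      zify; omega
    · rw [hop_eq]
  · obtain ⟨m, hm⟩ : ∃ m : ℕ, a = ((r * d + m : ℕ) : ℤ) := ⟨(a - r * d).toNat, by push_cast; omega⟩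
    subst hm
    refine con r P q k hr hq AA _ d m g (by
      have : (-((r * d + m : ℕ) : ℤ)).toNat = 0 := by omega
      simpa only [this, Nat.sub_zero] using hg) ?_ ?_
    · intro i j t ht h1 h2 h3
      refine hv i j h1 h2 (by omega) ?_ (by positivity)
      rw [← h3]; push_cast; omega
    · intro h hh
      exact ⟨_, hAA _ (UV_mem r P k d m h hh), fun i j => UV_mm ..⟩

theorem hom1 (r P q k : ℕ) (hr : 1 ≤ r) (hq : r * q ≤ P) (AA : Submodule ℂ (Module.End ℂ R2))
    (hAA : ∀ A ∈ FW r P ^ k, A ∈ AA) (hAA' : ∀ A ∈ FW r P ^ k, Mf Xv * A ∈ AA)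
    (a : ℤ) (d : ℕ) (g : ℕ → ℕ → ℂ)
    (hg : g ∈ PF (k + 1 - (-a).toNat - d))
    (hv : ∀ i j : ℕ, d ≤ j → j ≤ q → i + r * j ≤ P → ((P + 1 : ℕ) : ℤ) + r * d < i + a + r * j →
      0 ≤ a → g i j = 0) : Approx r P q k AA (hop (a, -(d : ℤ)) g) := by
  by_cases ha : a ≤ r * d
  · refine ⟨_, hAA _ (L1 r P k a.toNat (-a).toNat d _ ?_ g hg (by omega)), fun i j _ _ => ?_,
      fun _ => hop_eq _ _ _⟩
    · have : (0 : ℤ) ≤ r * d := by positivity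
      zify; omega
    · rw [hop_eq]
  · obtain ⟨m, hm⟩ : ∃ m : ℕ, a = ((r * d + m + 1 : ℕ) : ℤ) :=
      ⟨(a - r * d - 1).toNat, by push_cast; omega⟩
    subst hm
    refine con r P q k hr hq AA _ d m g (by
      have : (-((r * d + m + 1 : ℕ) : ℤ)).toNat = 0 := by omega
      simpa only [this, Nat.sub_zero] using hg) ?_ ?_
    · intro i j t ht h1 h2 h3
      refine hv i j h1 h2 (by omega) ?_ (by positivity)
      rw [← h3]; push_cast; omega
    · intro h hh
      refine ⟨_, hAA' _ (UV_mem r P k d m h hh), fun i j => ?_⟩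
      rw [Module.End.mul_apply, UV_mm, map_smul, Mfx1_mm]; rfl

theorem homm (r P p' q k : ℕ) (hr : 1 ≤ r) (hq : r * q ≤ P) (hP : p' + 1 = P)
    (AA : Submodule ℂ (Module.End ℂ R2))
    (hA0 : ∀ A ∈ FW r P ^ k, (Mf Xv * Dx + (r : ℂ) • (Mf Yv * Dy) - (P : ℂ) • 1) * A ∈ AA)
    (hA1 : ∀ A ∈ FW r P ^ k, Dx * A ∈ AA)
    (hA2 : ∀ A ∈ FW r P ^ k, ∀ α, α + 1 ≤ r → (Mf (Xv ^ α) * Dy) * A ∈ AA)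
    (a : ℤ) (d : ℕ) (g : ℕ → ℕ → ℂ)
    (hg : g ∈ PF (k + 1 - (-a).toNat - d))
    (hv : ∀ i j : ℕ, d ≤ j → j ≤ q → i + r * j ≤ P → (p' : ℤ) + r * d < i + a + r * j →
      0 ≤ a → g i j = 0) : Approx r P q k AA (hop (a, -(d : ℤ)) g) := by
  by_cases ha : a < r * d
  · suffices h : hop (a, -(d : ℤ)) g ∈ AA from ⟨_, h, fun _ _ _ _ => rfl, fun _ => rfl⟩
    rw [hop_eq]
    rcases d with _ | d
    · obtain ⟨b, hb⟩ : ∃ b : ℕ, a = -((b + 1 : ℕ) : ℤ) := ⟨(-a - 1).toNat, by push_cast at *; omega⟩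
      subst hb
      have e : UU (-((b + 1 : ℕ) : ℤ)).toNat (- -((b + 1 : ℕ) : ℤ)).toNat 0 = Dx * UU 0 b 0 := by
        have e1 : (-((b + 1 : ℕ) : ℤ)).toNat = 0 := by omega
        have e2 : (- -((b + 1 : ℕ) : ℤ)).toNat = b + 1 := by omega
        rw [e1, e2]
        have : Mf (Xv ^ 0) = 1 := by refine LinearMap.ext fun x => ?_; simp [Mf]
        rw [UU, UU, this, pow_succ']; simp
      rw [e, mul_assoc]
      exact hA1 _ (L1 r P k 0 b 0 _ (by simp) g hg (by omega))
    · have ha' : a.toNat + 1 ≤ r * d + r := by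
        zify; push_cast at ha; rw [mul_add] at ha
        have : (0 : ℤ) ≤ r * d := by positivity
        omega
      have e : UU a.toNat (-a).toNat (d + 1) = (Mf (Xv ^ (min a.toNat (r - 1))) * Dy) *
          UU (a.toNat - min a.toNat (r - 1)) (-a).toNat d := by
        apply end_ext; intro i j
        simp only [Module.End.mul_apply, UU_mm, map_smul, Dy_mm, Mfx_mm, smul_smul,
          Nat.descFactorial_succ, Nat.sub_sub]
        congr 1
        · push_cast; ring
        · congr 1; omega
      rw [e, mul_assoc]
      exact hA2 _ (L1 r P k _ _ d _ (by omega) g hg (by omega)) _ (by omega)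
  · obtain ⟨m, hm⟩ : ∃ m : ℕ, a = ((r * d + m : ℕ) : ℤ) := ⟨(a - r * d).toNat, by push_cast; omega⟩
    subst hm
    refine con r P q k hr hq AA _ d (m + 1) g (by
      have : (-((r * d + m : ℕ) : ℤ)).toNat = 0 := by omega
      simpa only [this, Nat.sub_zero] using hg) ?_ ?_
    · intro i j t ht h1 h2 h3
      refine hv i j h1 h2 (by omega) ?_ (by positivity)
      push_cast; zify at h3 hP; omega
    · intro h hh
      refine ⟨_, hA0 _ (UV_mem r P k d m h (PF_mono (by omega) hh)), fun i j => ?_⟩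
      rw [Module.End.mul_apply, UV_mm, map_smul, lead_mm, smul_smul]
      by_cases hj : j < d
      · rw [Nat.descFactorial_eq_zero_iff_lt.2 hj]; simp
      · congr 1
        rw [lf, lf, Finset.prod_range_succ, Nat.cast_sub (by omega)]
        push_cast; ring

theorem matOp_apply (A B C D : Module.End ℂ R2) (u v : R2) :
    matOp A B C D (u, v) = (A u + B v, C u + D v) := rfl

theorem matOp_mul (A B C D A' B' C' D' : Module.End ℂ R2) :
    matOp A B C D * matOp A' B' C' D' =
      matOp (A * A' + B * C') (A * B' + B * D') (C * A' + D * C') (C * B' + D * D') := by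
  refine LinearMap.ext fun ⟨u, v⟩ => ?_
  simp only [Module.End.mul_apply, matOp_apply, map_add, LinearMap.add_apply, Prod.mk.injEq]
  constructor <;> abel

theorem matOp_add (A B C D A' B' C' D' : Module.End ℂ R2) :
    matOp A B C D + matOp A' B' C' D' = matOp (A + A') (B + B') (C + C') (D + D') := by
  refine LinearMap.ext fun ⟨u, v⟩ => ?_
  simp only [matOp_apply, LinearMap.add_apply, Prod.mk.injEq, Prod.mk_add_mk]
  constructor <;> abel

theorem matOp_smul (c : ℂ) (A B C D : Module.End ℂ R2) :
    c • matOp A B C D = matOp (c • A) (c • B) (c • C) (c • D) := by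
  refine LinearMap.ext fun ⟨u, v⟩ => ?_
  simp only [matOp_apply, LinearMap.smul_apply, Prod.smul_mk, smul_add]

theorem matOp_one : (1 : Module.End ℂ V2) = matOp 1 0 0 1 := by
  refine LinearMap.ext fun ⟨u, v⟩ => ?_
  simp [matOp_apply]

theorem matOp_zero : (0 : Module.End ℂ V2) = matOp 0 0 0 0 := by
  refine LinearMap.ext fun ⟨u, v⟩ => ?_
  simp only [matOp_apply, LinearMap.zero_apply, add_zero]; rfl

/-- span of the identity and the matrix generators -/
def GW (r p : ℕ) : Submodule ℂ (Module.End ℂ V2) := Submodule.span ℂ ({1} ∪ Gstair r p)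

theorem GW_one (r p : ℕ) : (1 : Module.End ℂ V2) ∈ GW r p := Submodule.subset_span (by simp)

theorem GW_gen {r p : ℕ} {x : Module.End ℂ V2} (h : x ∈ Gstair r p) : x ∈ GW r p :=
  Submodule.subset_span (Or.inr h)

theorem GW_pow_le (r p n : ℕ) : GW r p ^ n ≤ Submodule.span ℂ (matProdsLE n (Gstair r p)) := by
  exact sm_words (Gstair r p) n

theorem dg_transfer1 (r p n : ℕ) (A : Module.End ℂ R2) (hA : A ∈ FW r (p - 1) ^ n) :
    ∃ B, matOp A 0 0 B ∈ GW r p ^ n := by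
  induction n generalizing A with
  | zero =>
    obtain ⟨c, rfl⟩ := sm_zero hA
    refine ⟨c • 1, ?_⟩
    have := sm_zero' (M := GW r p) c
    rw [matOp_one, matOp_smul] at this
    simpa using this
  | succ n ih =>
    refine sm_ind (p := fun A => ∃ B, matOp A 0 0 B ∈ GW r p ^ (n + 1)) (fun x hx y hy => ?_) (fun x y h1 h2 => ?_) hA
    · obtain ⟨B, hB⟩ := ih x hx
      have : ∃ B', matOp y 0 0 B' ∈ GW r p := by
        induction hy using Submodule.span_induction with
        | mem y hy =>
          simp only [Wset, Set.mem_union, Set.mem_insert_iff, Set.mem_singleton_iff,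
            Set.mem_ofPred_eq] at hy
          rcases hy with rfl | (rfl | rfl | rfl | rfl) | ⟨i, hi, rfl⟩
          · exact ⟨1, matOp_one ▸ GW_one r p⟩
          · exact ⟨_, GW_gen (Or.inl (Or.inl (by simp [Tg1, dg]; left; rfl)))⟩
          · exact ⟨W2 r p, GW_gen (Or.inl (Or.inl (by simp [Tg2, dg])))⟩
          · exact ⟨W3 p, GW_gen (Or.inl (Or.inl (by simp [Tg3, dg])))⟩
          · exact ⟨W4, GW_gen (Or.inl (Or.inl (by simp [Tg4, dg])))⟩
          · exact ⟨W5i i, GW_gen (Or.inl (Or.inr ⟨i, hi, rfl⟩))⟩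
        | zero => exact ⟨0, by rw [← matOp_zero]; exact zero_mem _⟩
        | add x y _ _ hx hy =>
          obtain ⟨B, hB⟩ := hx
          obtain ⟨B', hB'⟩ := hy
          refine ⟨B + B', ?_⟩
          have := add_mem hB hB'
          rw [matOp_add] at this
          simpa using this
        | smul c x _ hx =>
          obtain ⟨B, hB⟩ := hx
          refine ⟨c • B, ?_⟩
          have := Submodule.smul_mem _ c hB
          rw [matOp_smul] at this
          simpa using this
      obtain ⟨B', hB'⟩ := this
      refine ⟨B * B', ?_⟩
      have := sm_mul rfl hB (sm_one hB')
      rw [matOp_mul] at this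
      simpa using this
    · obtain ⟨B, hB⟩ := h1
      obtain ⟨B', hB'⟩ := h2
      refine ⟨B + B', ?_⟩
      have := add_mem hB hB'
      rw [matOp_add] at this
      simpa using this

theorem dg_transfer2 (r p n : ℕ) (A : Module.End ℂ R2) (hA : A ∈ FW r p ^ n) :
    ∃ B, matOp B 0 0 A ∈ GW r p ^ n := by
  induction n generalizing A with
  | zero =>
    obtain ⟨c, rfl⟩ := sm_zero hA
    refine ⟨c • 1, ?_⟩
    have := sm_zero' (M := GW r p) c
    rw [matOp_one, matOp_smul] at this
    simpa using this
  | succ n ih =>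
    refine sm_ind (p := fun A => ∃ B, matOp B 0 0 A ∈ GW r p ^ (n + 1)) (fun x hx y hy => ?_) (fun x y h1 h2 => ?_) hA
    · obtain ⟨B, hB⟩ := ih x hx
      have : ∃ B', matOp B' 0 0 y ∈ GW r p := by
        induction hy using Submodule.span_induction with
        | mem y hy =>
          simp only [Wset, Set.mem_union, Set.mem_insert_iff, Set.mem_singleton_iff,
            Set.mem_ofPred_eq] at hy
          rcases hy with rfl | (rfl | rfl | rfl | rfl) | ⟨i, hi, rfl⟩
          · exact ⟨1, matOp_one ▸ GW_one r p⟩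
          · exact ⟨_, GW_gen (Or.inl (Or.inl (by simp [Tg1, dg]; left; rfl)))⟩
          · exact ⟨W2 r (p - 1), GW_gen (Or.inl (Or.inl (by simp [Tg2, dg])))⟩
          · exact ⟨W3 (p - 1), GW_gen (Or.inl (Or.inl (by simp [Tg3, dg])))⟩
          · exact ⟨W4, GW_gen (Or.inl (Or.inl (by simp [Tg4, dg])))⟩
          · exact ⟨W5i i, GW_gen (Or.inl (Or.inr ⟨i, hi, rfl⟩))⟩
        | zero => exact ⟨0, by rw [← matOp_zero]; exact zero_mem _⟩
        | add x y _ _ hx hy =>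
          obtain ⟨B, hB⟩ := hx
          obtain ⟨B', hB'⟩ := hy
          refine ⟨B + B', ?_⟩
          have := add_mem hB hB'
          rw [matOp_add] at this
          simpa using this
        | smul c x _ hx =>
          obtain ⟨B, hB⟩ := hx
          refine ⟨c • B, ?_⟩
          have := Submodule.smul_mem _ c hB
          rw [matOp_smul] at this
          simpa using this
      obtain ⟨B', hB'⟩ := this
      refine ⟨B * B', ?_⟩
      have := sm_mul rfl hB (sm_one hB')
      rw [matOp_mul] at this
      simpa using this
    · obtain ⟨B, hB⟩ := h1
      obtain ⟨B', hB'⟩ := h2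
      refine ⟨B + B', ?_⟩
      have := add_mem hB hB'
      rw [matOp_add] at this
      simpa using this

theorem J_mem (r p : ℕ) : Jgen p ∈ GW r p := GW_gen (Or.inl (Or.inl (by simp)))

theorem e1_mem (r p : ℕ) : matOp 1 0 0 0 ∈ GW r p := by
  have h := sub_mem (Submodule.smul_mem _ (2 : ℂ) (J_mem r p))
    (Submodule.smul_mem _ (p : ℂ) (GW_one r p))
  convert h using 1
  refine LinearMap.ext fun ⟨u, v⟩ => ?_
  simp only [Jgen, dg, matOp_apply, LinearMap.sub_apply, LinearMap.smul_apply, Module.End.one_apply,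
    LinearMap.zero_apply, Prod.smul_mk, Prod.mk_sub_mk, Prod.mk.injEq]
  constructor <;> module

theorem e2_mem (r p : ℕ) : matOp 0 0 0 1 ∈ GW r p := by
  have h := sub_mem (GW_one r p) (e1_mem r p)
  convert h using 1
  refine LinearMap.ext fun ⟨u, v⟩ => ?_
  simp [matOp_apply]

/-- operators `A` which become, placed in a block, words of length at most `n` -/
def blk11 (r p n : ℕ) : Submodule ℂ (Module.End ℂ R2) where
  carrier := {A | matOp A 0 0 0 ∈ GW r p ^ n}
  zero_mem' := by simp only [Set.mem_ofPred_eq]; rw [← matOp_zero]; exact zero_mem _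
  add_mem' {a b} ha hb := by
    change matOp (a + b) 0 0 0 ∈ GW r p ^ n
    have := add_mem (show matOp a 0 0 0 ∈ GW r p ^ n from ha) (show matOp b 0 0 0 ∈ GW r p ^ n from hb)
    rw [matOp_add] at this
    simpa using this
  smul_mem' c a ha := by
    change matOp (c • a) 0 0 0 ∈ GW r p ^ n
    have := Submodule.smul_mem _ c (show matOp a 0 0 0 ∈ GW r p ^ n from ha)
    rw [matOp_smul] at this
    simpa using this

/-- same, upper right block -/
def blk12 (r p n : ℕ) : Submodule ℂ (Module.End ℂ R2) where
  carrier := {A | matOp 0 A 0 0 ∈ GW r p ^ n}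
  zero_mem' := by simp only [Set.mem_ofPred_eq]; rw [← matOp_zero]; exact zero_mem _
  add_mem' {a b} ha hb := by
    change matOp 0 (a + b) 0 0 ∈ GW r p ^ n
    have := add_mem (show matOp 0 a 0 0 ∈ GW r p ^ n from ha) (show matOp 0 b 0 0 ∈ GW r p ^ n from hb)
    rw [matOp_add] at this
    simpa using this
  smul_mem' c a ha := by
    change matOp 0 (c • a) 0 0 ∈ GW r p ^ n
    have := Submodule.smul_mem _ c (show matOp 0 a 0 0 ∈ GW r p ^ n from ha)
    rw [matOp_smul] at this
    simpa using this

/-- same, lower left block -/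
def blk21 (r p n : ℕ) : Submodule ℂ (Module.End ℂ R2) where
  carrier := {A | matOp 0 0 A 0 ∈ GW r p ^ n}
  zero_mem' := by simp only [Set.mem_ofPred_eq]; rw [← matOp_zero]; exact zero_mem _
  add_mem' {a b} ha hb := by
    change matOp 0 0 (a + b) 0 ∈ GW r p ^ n
    have := add_mem (show matOp 0 0 a 0 ∈ GW r p ^ n from ha) (show matOp 0 0 b 0 ∈ GW r p ^ n from hb)
    rw [matOp_add] at this
    simpa using this
  smul_mem' c a ha := by
    change matOp 0 0 (c • a) 0 ∈ GW r p ^ n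
    have := Submodule.smul_mem _ c (show matOp 0 0 a 0 ∈ GW r p ^ n from ha)
    rw [matOp_smul] at this
    simpa using this

/-- same, lower right block -/
def blk22 (r p n : ℕ) : Submodule ℂ (Module.End ℂ R2) where
  carrier := {A | matOp 0 0 0 A ∈ GW r p ^ n}
  zero_mem' := by simp only [Set.mem_ofPred_eq]; rw [← matOp_zero]; exact zero_mem _
  add_mem' {a b} ha hb := by
    change matOp 0 0 0 (a + b) ∈ GW r p ^ n
    have := add_mem (show matOp 0 0 0 a ∈ GW r p ^ n from ha) (show matOp 0 0 0 b ∈ GW r p ^ n from hb)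
    rw [matOp_add] at this
    simpa using this
  smul_mem' c a ha := by
    change matOp 0 0 0 (c • a) ∈ GW r p ^ n
    have := Submodule.smul_mem _ c (show matOp 0 0 0 a ∈ GW r p ^ n from ha)
    rw [matOp_smul] at this
    simpa using this

theorem to11 (r p k : ℕ) : ∀ A ∈ FW r (p - 1) ^ k, A ∈ blk11 r p (k + 1) := by
  intro A hA
  obtain ⟨B, hB⟩ := dg_transfer1 r p k A hA
  have := sm_mul rfl hB (sm_one (e1_mem r p))
  rw [matOp_mul] at this
  change matOp A 0 0 0 ∈ GW r p ^ (k + 1)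
  simpa using this

theorem to22 (r p k : ℕ) : ∀ A ∈ FW r p ^ k, A ∈ blk22 r p (k + 1) := by
  intro A hA
  obtain ⟨B, hB⟩ := dg_transfer2 r p k A hA
  have := sm_mul rfl hB (sm_one (e2_mem r p))
  rw [matOp_mul] at this
  change matOp 0 0 0 A ∈ GW r p ^ (k + 1)
  simpa using this

theorem to21 (r p k : ℕ) (Q : Module.End ℂ R2) (hQ : matOp 0 0 Q 0 ∈ Gstair r p) :
    ∀ A ∈ FW r (p - 1) ^ k, Q * A ∈ blk21 r p (k + 1) := by
  intro A hA
  obtain ⟨B, hB⟩ := dg_transfer1 r p k A hA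
  have := sm_mul (n := k + 1) (by omega) (sm_one (GW_gen hQ)) hB
  rw [matOp_mul] at this
  change matOp 0 0 (Q * A) 0 ∈ GW r p ^ (k + 1)
  simpa using this

theorem to12 (r p k : ℕ) (Q : Module.End ℂ R2) (hQ : matOp 0 Q 0 0 ∈ Gstair r p) :
    ∀ A ∈ FW r p ^ k, Q * A ∈ blk12 r p (k + 1) := by
  intro A hA
  obtain ⟨B, hB⟩ := dg_transfer2 r p k A hA
  have := sm_mul (n := k + 1) (by omega) (sm_one (GW_gen hQ)) hB
  rw [matOp_mul] at this
  change matOp 0 (Q * A) 0 0 ∈ GW r p ^ (k + 1)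
  simpa using this

theorem approx_Smod {r P q : ℕ} {T A : Module.End ℂ R2}
    (h : ∀ i j, j ≤ q → i + r * j ≤ P → T (mm i j) = A (mm i j)) :
    ∀ w ∈ Smod r P q, T w = A w := by
  intro w hw
  induction hw using Submodule.span_induction with
  | mem x hx =>
    obtain ⟨i, j, h1, h2, rfl⟩ := hx
    exact h i j h2 h1
  | zero => simp
  | add x y _ _ hx hy => rw [map_add, map_add, hx, hy]
  | smul c x _ hx => rw [map_smul, map_smul, hx]

theorem stmt18 (r p q k : ℕ) (hr : 2 ≤ r) (hp : 1 ≤ p) (hq : r * q ≤ p - 1)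
    (f11 f12 f21 f22 : ℕ × ℕ → R2)
    (h11 : ∀ ij : ℕ × ℕ, k < ij.1 + ij.2 → f11 ij = 0)
    (h12 : ∀ ij : ℕ × ℕ, k < ij.1 + ij.2 → f12 ij = 0)
    (h21 : ∀ ij : ℕ × ℕ, k < ij.1 + ij.2 → f21 ij = 0)
    (h22 : ∀ ij : ℕ × ℕ, k < ij.1 + ij.2 → f22 ij = 0)
    (hy11 : NonposY (diffOp (sIdx r (p - 1) q) f11))
    (hy12 : NonposY (diffOp (sIdx r p q) f12))
    (hy21 : NonposY (diffOp (sIdx r (p - 1) q) f21))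
    (hy22 : NonposY (diffOp (sIdx r p q) f22))
    (T : Module.End ℂ V2)
    (hT : T = matOp (diffOp (sIdx r (p - 1) q) f11) (diffOp (sIdx r p q) f12)
                    (diffOp (sIdx r (p - 1) q) f21) (diffOp (sIdx r p q) f22))
    (hpres : ∀ w ∈ (Smod r (p - 1) q).prod (Smod r p q),
      T w ∈ (Smod r (p - 1) q).prod (Smod r p q)) :
    ∃ P ∈ Submodule.span ℂ (matProdsLE (k + 1) (Gstair r p)),
      (∀ w ∈ (Smod r (p - 1) q).prod (Smod r p q), T w = P w) ∧ (k ≤ q → T = P) := by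
  obtain ⟨p, rfl⟩ : ∃ p0, p = p0 + 1 := ⟨p - 1, by omega⟩
  have hp1 : p + 1 - 1 = p := rfl
  rw [hp1] at hq
  have P1 : ∀ w ∈ Smod r p q, diffOp (sIdx r (p + 1 - 1) q) f11 w ∈ Smod r p q ∧
      diffOp (sIdx r (p + 1 - 1) q) f21 w ∈ Smod r (p + 1) q := by
    intro w hw
    have := hpres (w, 0) ⟨hw, zero_mem _⟩
    rw [hT, matOp_apply, map_zero, map_zero, add_zero, add_zero] at this
    exact this
  have P2 : ∀ w ∈ Smod r (p + 1) q, diffOp (sIdx r (p + 1) q) f12 w ∈ Smod r p q ∧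
      diffOp (sIdx r (p + 1) q) f22 w ∈ Smod r (p + 1) q := by
    intro w hw
    have := hpres (0, w) ⟨zero_mem _, hw⟩
    rw [hT, matOp_apply, map_zero, map_zero, zero_add, zero_add] at this
    exact this
  obtain ⟨A11, m11, a11, b11⟩ := scalar r p p q k (blk11 r (p + 1) (k + 1))
    (hom0 r p q k (by omega) hq _ (to11 r (p + 1) k)) _ (diffOp_mem k _ f11 h11) hy11
    fun w hw => (P1 w hw).1
  obtain ⟨A21, m21, a21, b21⟩ := scalar r p (p + 1) q k (blk21 r (p + 1) (k + 1))
    (hom1 r p q k (by omega) hq _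
      (fun A hA => by
        have := to21 r (p + 1) k 1 (Or.inl (Or.inl (by simp [Qm0]))) A hA
        rwa [one_mul] at this)
      (to21 r (p + 1) k (Mf Xv) (Or.inl (Or.inl (by simp [Qm1])))))
    _ (diffOp_mem k _ f21 h21) hy21 fun w hw => (P1 w hw).2
  obtain ⟨A12, m12, a12, b12⟩ := scalar r (p + 1) p q k (blk12 r (p + 1) (k + 1))
    (homm r (p + 1) p q k (by omega) (by omega) rfl _
      (to12 r (p + 1) k _ (Or.inl (Or.inl (by simp [Qp0]))))
      (to12 r (p + 1) k _ (Or.inl (Or.inl (by simp [Qp1]))))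
      (fun A hA α hα => to12 r (p + 1) k _ (Or.inr ⟨α, hα, rfl⟩) A hA))
    _ (diffOp_mem k _ f12 h12) hy12 fun w hw => (P2 w hw).1
  obtain ⟨A22, m22, a22, b22⟩ := scalar r (p + 1) (p + 1) q k (blk22 r (p + 1) (k + 1))
    (hom0 r (p + 1) q k (by omega) (by omega) _ (to22 r (p + 1) k)) _ (diffOp_mem k _ f22 h22) hy22
    fun w hw => (P2 w hw).2
  refine ⟨matOp A11 A12 A21 A22, GW_pow_le _ _ _ ?_, ?_, fun hk => ?_⟩
  · have := add_mem (add_mem (show matOp A11 0 0 0 ∈ GW r (p + 1) ^ (k + 1) from m11)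
      (show matOp 0 A12 0 0 ∈ GW r (p + 1) ^ (k + 1) from m12))
      (add_mem (show matOp 0 0 A21 0 ∈ GW r (p + 1) ^ (k + 1) from m21)
      (show matOp 0 0 0 A22 ∈ GW r (p + 1) ^ (k + 1) from m22))
    simp only [matOp_add] at this
    simpa using this
  · rintro ⟨u, v⟩ ⟨hu, hv⟩
    rw [hT, matOp_apply, matOp_apply, approx_Smod a11 u hu, approx_Smod a12 v hv,
      approx_Smod a21 u hu, approx_Smod a22 v hv]
  · rw [hT, b11 hk, b12 hk, b21 hk, b22 hk]
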